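/- arXiv:1308.0065 — 2 statements merged into one kernel-verified Lean document; each statement's English description precedes it below -/
import Mathlib

section
/- The number of squarefree integers n ≤ y all of whose prime factors are congruent to 1 modulo q is O_q(y (log log y / log y)^{1 - 1/φ(q)}), where φ is Euler's totient function. -/
section AuxCount

open ArithmeticFunction.vonMangoldt in
lemma aux_residue_upper (q : ℕ) [NeZero q] :
    ∃ C : ℝ, 0 ≤ C ∧ ∀ x : ℝ, 1 < x → x ≤ 2 → ∀ P : Finset ℕ,
      (∀ p ∈ P, p.Prime ∧ (p : ZMod q) = 1) →
      ∑ p ∈ P, Real.log p * (p : ℝ) ^ (-x) ≤ (q.totient : ℝ)⁻¹ / (x - 1) + C := by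
  have ha : IsUnit (1 : ZMod q) := isUnit_one
  have S {x : ℝ} (hx : 1 < x) :
      Summable (fun n : ℕ => residueClass (1 : ZMod q) n / (n : ℝ) ^ x) := by
    have h : LSeriesSummable (fun n => ((residueClass (1 : ZMod q) n : ℝ) : ℂ)) (x : ℂ) :=
      LSeriesSummable_of_abscissaOfAbsConv_lt_re <|
        (abscissaOfAbsConv_residueClass_le_one (1 : ZMod q)).trans_lt <| by
          simp only [Complex.ofReal_re]; norm_cast
    refine h.norm.congr fun n => ?_
    rcases eq_or_ne n 0 with rfl | hn
    · simp
    · rw [LSeries.term_of_ne_zero hn, norm_div, Complex.norm_real,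
        Complex.norm_natCast_cpow_of_pos (Nat.pos_of_ne_zero hn), Complex.ofReal_re,
        Real.norm_of_nonneg (residueClass_nonneg _ _)]
  have H {x : ℝ} (hx : 1 < x) :
      ∑' n, residueClass (1 : ZMod q) n / (n : ℝ) ^ x =
        (LFunctionResidueClassAux (1 : ZMod q) x).re + (q.totient : ℝ)⁻¹ / (x - 1) := by
    refine Complex.ofReal_injective ?_
    simp only [Complex.ofReal_tsum, Complex.ofReal_div, Complex.ofReal_cpow (Nat.cast_nonneg _),
      Complex.ofReal_natCast,
      Complex.ofReal_add, Complex.ofReal_inv, Complex.ofReal_sub, Complex.ofReal_one]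
    simp_rw [← LFunctionResidueClassAux_real ha hx,
      eqOn_LFunctionResidueClassAux ha <| Set.mem_ofPred.mpr (Complex.ofReal_re x ▸ hx),
      sub_add_cancel, LSeries, LSeries.term]
    refine tsum_congr fun n ↦ ?_
    split_ifs with hn
    · simp only [hn, residueClass_apply_zero, Complex.ofReal_zero, zero_div]
    · rfl
  have hcont : ContinuousOn (fun x : ℝ ↦ (LFunctionResidueClassAux (1 : ZMod q) x).re)
      (Set.Icc 1 2) :=
    Complex.continuous_re.continuousOn.comp (t := Set.univ)
      (continuousOn_LFunctionResidueClassAux (1 : ZMod q))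
      (fun ⦃x⦄ a ↦ trivial) |>.comp Complex.continuous_ofReal.continuousOn fun x hx ↦ by
        simpa only [Set.mem_ofPred_eq, Complex.ofReal_re] using hx.1
  obtain ⟨C, hC⟩ := bddAbove_def.mp <| IsCompact.bddAbove_image isCompact_Icc hcont
  refine ⟨max C 0, le_max_right _ _, fun x hx hx2 P hP => ?_⟩
  have h1 : (LFunctionResidueClassAux (1 : ZMod q) x).re ≤ C :=
    hC _ (Set.mem_image_of_mem (fun x : ℝ ↦ (LFunctionResidueClassAux (1 : ZMod q) x).re)
      ⟨hx.le, hx2⟩)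
  have h2 : ∑ p ∈ P, Real.log p * (p : ℝ) ^ (-x) =
      ∑ p ∈ P, residueClass (1 : ZMod q) p / (p : ℝ) ^ x := by
    refine Finset.sum_congr rfl fun p hp => ?_
    obtain ⟨hp1, hp2⟩ := hP p hp
    rw [residueClass, Set.indicator_of_mem (by exact hp2),
      ArithmeticFunction.vonMangoldt_apply_prime hp1, Real.rpow_neg (Nat.cast_nonneg _),
      div_eq_mul_inv]
  rw [h2]
  have h3 := (S hx).sum_le_tsum P (fun n _ => div_nonneg (residueClass_nonneg _ _)
    (Real.rpow_nonneg (Nat.cast_nonneg _) _))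
  rw [H hx] at h3
  linarith [le_max_left C 0]

lemma aux_sum_rpow (q : ℕ) [NeZero q] :
    ∃ C : ℝ, ∀ s : ℝ, 1 < s → s ≤ 2 → ∀ P : Finset ℕ,
      (∀ p ∈ P, p.Prime ∧ (p : ZMod q) = 1) →
      ∑ p ∈ P, (p : ℝ) ^ (-s) ≤ - (q.totient : ℝ)⁻¹ * Real.log (s - 1) + C := by
  obtain ⟨C, hC0, hC⟩ := aux_residue_upper q
  refine ⟨∑' n : ℕ, (n : ℝ) ^ (-2 : ℝ) + C, fun s hs hs2 P hP => ?_⟩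
  set g : ℝ → ℝ := fun x => ∑ p ∈ P, (p : ℝ) ^ (-x) + (q.totient : ℝ)⁻¹ * Real.log (x - 1) + C * x
    with hg
  have hd : ∀ x : ℝ, 1 < x → HasDerivAt g
      (-∑ p ∈ P, Real.log p * (p : ℝ) ^ (-x) + (q.totient : ℝ)⁻¹ / (x - 1) + C) x := by
    intro x hx
    have h1 : HasDerivAt (fun x : ℝ => ∑ p ∈ P, (p : ℝ) ^ (-x))
        (∑ p ∈ P, -(Real.log p * (p : ℝ) ^ (-x))) x := by
      refine HasDerivAt.fun_sum fun p hp => ?_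
      have hp0 : (0 : ℝ) < p := by exact_mod_cast (hP p hp).1.pos
      have := (hasDerivAt_neg x).const_rpow hp0
      convert! this using 1
      ring
    have h2 : HasDerivAt (fun x : ℝ => (q.totient : ℝ)⁻¹ * Real.log (x - 1))
        ((q.totient : ℝ)⁻¹ / (x - 1)) x := by
      have := (((hasDerivAt_id x).sub_const 1).log (by simp; linarith)).const_mul
        ((q.totient : ℝ)⁻¹)
      convert! this using 1
      simp [div_eq_mul_inv]
    have h3 : HasDerivAt (fun x : ℝ => C * x) C x := by
      simpa using (hasDerivAt_id x).const_mul C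
    rw [← Finset.sum_neg_distrib]
    exact (h1.add h2).add h3
  have hmono : MonotoneOn g (Set.Icc s 2) := by
    refine monotoneOn_of_deriv_nonneg (convex_Icc _ _)
      (fun x hx => (hd x (by linarith [hx.1])).continuousAt.continuousWithinAt)
      (fun x hx => ?_) (fun x hx => ?_)
    · rw [interior_Icc] at hx
      exact (hd x (by linarith [hx.1])).differentiableAt.differentiableWithinAt
    · rw [interior_Icc] at hx
      rw [(hd x (by linarith [hx.1])).deriv]
      linarith [hC x (by linarith [hx.1]) hx.2.le P hP]
  have h := hmono ⟨le_rfl, hs2⟩ ⟨hs2, le_rfl⟩ hs2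
  simp only [hg] at h
  have h4 : ∑ p ∈ P, (p : ℝ) ^ (-2 : ℝ) ≤ ∑' n : ℕ, (n : ℝ) ^ (-2 : ℝ) :=
    (Real.summable_nat_rpow.mpr (by norm_num)).sum_le_tsum P
      (fun n _ => Real.rpow_nonneg (Nat.cast_nonneg _) _)
  norm_num at h h4 ⊢
  nlinarith

lemma aux_sum_inv (q : ℕ) [NeZero q] :
    ∃ C : ℝ, ∀ y : ℝ, Real.exp 1 ≤ y → ∀ P : Finset ℕ,
      (∀ p ∈ P, p.Prime ∧ (p : ZMod q) = 1 ∧ (p : ℝ) ≤ y) →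
      ∑ p ∈ P, (p : ℝ)⁻¹ ≤ (q.totient : ℝ)⁻¹ * Real.log (Real.log y) + C := by
  obtain ⟨C, hC0, hC⟩ := aux_residue_upper q
  obtain ⟨D, hD⟩ := aux_sum_rpow q
  refine ⟨D + Real.exp 1 * ((q.totient : ℝ)⁻¹ + C), fun y hy P hP => ?_⟩
  have hy0 : 0 < y := lt_of_lt_of_le (Real.exp_pos _) hy
  have hL : 1 ≤ Real.log y := by rwa [Real.le_log_iff_exp_le hy0]
  have hL0 : 0 < Real.log y := by linarith
  have hLi : (Real.log y)⁻¹ ≤ 1 := inv_le_one_of_one_le₀ hL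
  have hLp : 0 < (Real.log y)⁻¹ := inv_pos.mpr hL0
  set s := 1 + (Real.log y)⁻¹ with hs
  have hP' : ∀ p ∈ P, p.Prime ∧ (p : ZMod q) = 1 := fun p hp => ⟨(hP p hp).1, (hP p hp).2.1⟩
  have h1 := hC s (by linarith) (by linarith) P hP'
  have h2 := hD s (by linarith) (by linarith) P hP'
  have hs1 : s - 1 = (Real.log y)⁻¹ := by rw [hs]; ring
  rw [hs1, div_inv_eq_mul] at h1
  rw [hs1, Real.log_inv] at h2
  have h3 : ∀ p ∈ P, (p : ℝ)⁻¹ ≤ (p : ℝ) ^ (-s) +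
      (Real.log y)⁻¹ * Real.exp 1 * (Real.log p * (p : ℝ) ^ (-s)) := by
    intro p hp
    obtain ⟨hpp, -, hpy⟩ := hP p hp
    have hp0 : (0 : ℝ) < p := by exact_mod_cast hpp.pos
    have hp1 : (1 : ℝ) ≤ p := by exact_mod_cast hpp.one_le
    have hlp : 0 ≤ Real.log p := Real.log_nonneg hp1
    set t := (Real.log y)⁻¹ * Real.log p with ht
    have ht0 : 0 ≤ t := by positivity
    have ht1 : t ≤ 1 := by
      rw [ht, inv_mul_le_one₀ hL0]
      exact Real.log_le_log hp0 hpy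
    have e1 : (p : ℝ) ^ (-s) = (p : ℝ)⁻¹ * Real.exp (-t) := by
      rw [hs, neg_add, Real.rpow_add hp0, Real.rpow_neg_one, Real.rpow_def_of_pos hp0]
      congr 2
      rw [ht]; ring
    have e2 : 1 - t ≤ Real.exp (-t) := by linarith [Real.add_one_le_exp (-t)]
    have e3 : 1 ≤ Real.exp 1 * Real.exp (-t) := by
      rw [← Real.exp_add]; exact Real.one_le_exp (by linarith)
    have e4 : (1 : ℝ) ≤ Real.exp (-t) + t * (Real.exp 1 * Real.exp (-t)) := by nlinarith
    have hpi : 0 < (p : ℝ)⁻¹ := inv_pos.mpr hp0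
    rw [e1]
    calc (p : ℝ)⁻¹ = (p : ℝ)⁻¹ * 1 := by ring
      _ ≤ (p : ℝ)⁻¹ * (Real.exp (-t) + t * (Real.exp 1 * Real.exp (-t))) := by gcongr
      _ = _ := by rw [ht]; ring
  have h4 := Finset.sum_le_sum h3
  rw [Finset.sum_add_distrib, ← Finset.mul_sum] at h4
  have h5 : (Real.log y)⁻¹ * Real.exp 1 * ∑ p ∈ P, Real.log p * (p : ℝ) ^ (-s) ≤
      Real.exp 1 * ((q.totient : ℝ)⁻¹ + C) := by
    calc _ ≤ (Real.log y)⁻¹ * Real.exp 1 * ((q.totient : ℝ)⁻¹ * Real.log y + C) := by gcongr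
      _ = Real.exp 1 * ((q.totient : ℝ)⁻¹ + (Real.log y)⁻¹ * C) := by field_simp
      _ ≤ Real.exp 1 * ((q.totient : ℝ)⁻¹ + 1 * C) := by gcongr
      _ = _ := by ring
  linarith

/-- The finite set being counted. -/
noncomputable def auxB (q N : ℕ) : Finset ℕ :=
  open Classical in (Finset.Icc 1 N).filter (fun n => Squarefree n ∧ ∀ p : ℕ, p.Prime → p ∣ n → p % q = 1)

/-- The finite set of primes involved. -/
noncomputable def auxP (q N : ℕ) : Finset ℕ :=
  (Finset.Icc 1 N).filter (fun p => p.Prime ∧ p % q = 1)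

lemma mem_auxB {q N n : ℕ} : n ∈ auxB q N ↔ (1 ≤ n ∧ n ≤ N) ∧ Squarefree n ∧
    ∀ p : ℕ, p.Prime → p ∣ n → p % q = 1 := by
  simp [auxB]

lemma mem_auxP {q N n : ℕ} : n ∈ auxP q N ↔ (1 ≤ n ∧ n ≤ N) ∧ n.Prime ∧ n % q = 1 := by
  simp [auxP]

lemma aux_sum_le_prod (q N : ℕ) :
    ∑ n ∈ auxB q N, (n : ℝ)⁻¹ ≤ Real.exp (∑ p ∈ auxP q N, (p : ℝ)⁻¹) := by
  classical
  have h1 : ∑ n ∈ auxB q N, (n : ℝ)⁻¹ =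
      ∑ S ∈ (auxB q N).image Nat.primeFactors, ∏ p ∈ S, (p : ℝ)⁻¹ := by
    rw [Finset.sum_image]
    · refine Finset.sum_congr rfl fun n hn => ?_
      rw [Finset.prod_inv_distrib, ← Nat.cast_prod,
        Nat.prod_primeFactors_of_squarefree (mem_auxB.mp hn).2.1]
    · intro a ha b hb hab
      rw [← Nat.prod_primeFactors_of_squarefree (mem_auxB.mp ha).2.1, hab,
        Nat.prod_primeFactors_of_squarefree (mem_auxB.mp hb).2.1]
  rw [h1]
  calc _ ≤ ∑ S ∈ (auxP q N).powerset, ∏ p ∈ S, (p : ℝ)⁻¹ := by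
        refine Finset.sum_le_sum_of_subset_of_nonneg ?_ fun S _ _ =>
          Finset.prod_nonneg fun p _ => by positivity
        intro S hS
        obtain ⟨n, hn, rfl⟩ := Finset.mem_image.mp hS
        rw [mem_auxB] at hn
        rw [Finset.mem_powerset]
        intro p hp
        have hpp := Nat.prime_of_mem_primeFactors hp
        have hd := Nat.dvd_of_mem_primeFactors hp
        exact mem_auxP.mpr ⟨⟨hpp.one_le, (Nat.le_of_dvd hn.1.1 hd).trans hn.1.2⟩, hpp,
          hn.2.2 p hpp hd⟩
    _ = ∏ p ∈ auxP q N, (1 + (p : ℝ)⁻¹) := (Finset.prod_one_add _).symm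
    _ ≤ ∏ p ∈ auxP q N, Real.exp ((p : ℝ)⁻¹) := by
        refine Finset.prod_le_prod (fun p _ => by positivity) fun p _ => ?_
        linarith [Real.add_one_le_exp ((p : ℝ)⁻¹)]
    _ = _ := (Real.exp_sum _ _).symm

lemma aux_sum_log (q N : ℕ) :
    ∑ n ∈ auxB q N, Real.log n ≤ ∑ m ∈ auxB q N, Chebyshev.theta ((N : ℝ) / m) := by
  classical
  have h1 : ∑ n ∈ auxB q N, Real.log n =
      ∑ x ∈ (auxB q N).sigma (fun n => n.primeFactors), Real.log (x.2 : ℕ) := by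
    rw [Finset.sum_sigma]
    refine Finset.sum_congr rfl fun n hn => ?_
    conv_lhs => rw [← Nat.prod_primeFactors_of_squarefree (mem_auxB.mp hn).2.1, Nat.cast_prod]
    rw [Real.log_prod]
    intro p hp
    exact_mod_cast (Nat.prime_of_mem_primeFactors hp).ne_zero
  have h2 : ∑ m ∈ auxB q N, Chebyshev.theta ((N : ℝ) / m) =
      ∑ x ∈ (auxB q N).sigma (fun m => (Finset.Ioc 0 (N / m)).filter Nat.Prime),
        Real.log (x.2 : ℕ) := by
    rw [Finset.sum_sigma]
    refine Finset.sum_congr rfl fun n hn => ?_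
    rw [Chebyshev.theta, Nat.floor_div_eq_div]
  rw [h1, h2]
  let f : (Σ _ : ℕ, ℕ) → (Σ _ : ℕ, ℕ) := fun x => ⟨x.1 / x.2, x.2⟩
  have hinj : Set.InjOn f ((auxB q N).sigma (fun n => n.primeFactors) : Finset (Σ _ : ℕ, ℕ)) := by
    rintro ⟨a, p⟩ ha ⟨b, r⟩ hb hab
    simp only [Finset.coe_sigma, Set.mem_sigma_iff, Finset.mem_coe] at ha hb
    simp only [f, Sigma.mk.injEq, heq_eq_eq] at hab ⊢
    obtain ⟨h, rfl⟩ := hab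
    refine ⟨?_, rfl⟩
    rw [← Nat.div_mul_cancel (Nat.dvd_of_mem_primeFactors ha.2), h,
      Nat.div_mul_cancel (Nat.dvd_of_mem_primeFactors hb.2)]
  calc _ = ∑ x ∈ ((auxB q N).sigma (fun n => n.primeFactors)).image f, Real.log (x.2 : ℕ) := by
        rw [Finset.sum_image hinj]
    _ ≤ _ := by
        refine Finset.sum_le_sum_of_subset_of_nonneg ?_ fun x _ _ => Real.log_natCast_nonneg _
        intro x hx
        obtain ⟨⟨n, p⟩, hn, rfl⟩ := Finset.mem_image.mp hx
        simp only [Finset.mem_sigma, f, Finset.mem_filter, Finset.mem_Ioc] at hn ⊢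
        obtain ⟨hn, hp⟩ := hn
        have hpp := Nat.prime_of_mem_primeFactors hp
        have hd := Nat.dvd_of_mem_primeFactors hp
        rw [mem_auxB] at hn ⊢
        have hpos : 0 < n / p := Nat.div_pos (Nat.le_of_dvd hn.1.1 hd) hpp.pos
        have hdd : n / p ∣ n := Nat.div_dvd_of_dvd hd
        refine ⟨⟨⟨hpos, (Nat.div_le_self _ _).trans hn.1.2⟩, hn.2.1.squarefree_of_dvd hdd,
          fun r hr hrd => hn.2.2 r hr (hrd.trans hdd)⟩, ⟨hpp.pos, ?_⟩, hpp⟩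
        rw [Nat.le_div_iff_mul_le hpos, Nat.mul_div_cancel' hd]
        exact hn.1.2

lemma aux_card_log (q N : ℕ) (y : ℝ) (hy : 0 < y) (hN : (N : ℝ) ≤ y) :
    ((auxB q N).card : ℝ) * Real.log y ≤
      (1 + Real.log 4) * y * ∑ n ∈ auxB q N, (n : ℝ)⁻¹ := by
  have h1 := aux_sum_log q N
  have h2 : ∑ m ∈ auxB q N, Chebyshev.theta ((N : ℝ) / m) ≤
      ∑ m ∈ auxB q N, Real.log 4 * y * (m : ℝ)⁻¹ := by
    refine Finset.sum_le_sum fun m _ => ?_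
    refine (Chebyshev.theta_le_log4_mul_x (by positivity)).trans ?_
    rw [div_eq_mul_inv, ← mul_assoc]
    gcongr
  have h3 : ∑ n ∈ auxB q N, (Real.log y - Real.log n) ≤ ∑ n ∈ auxB q N, y * (n : ℝ)⁻¹ := by
    refine Finset.sum_le_sum fun n hn => ?_
    have hn0 : (0 : ℝ) < n := by exact_mod_cast (mem_auxB.mp hn).1.1
    rw [← Real.log_div hy.ne' hn0.ne', ← div_eq_mul_inv]
    exact (Real.log_le_sub_one_of_pos (by positivity)).trans (by linarith)
  rw [Finset.sum_sub_distrib, Finset.sum_const, nsmul_eq_mul] at h3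
  rw [← Finset.mul_sum] at h2 h3
  linarith

end AuxCount

theorem count_squarefree_with_primes_one_mod_q (q : ℕ) (hq : 2 ≤ q) :
    ∃ C y₀ : ℝ, ∀ y : ℝ, y₀ ≤ y →
      (Nat.card {n : ℕ | 1 ≤ n ∧ (n : ℝ) ≤ y ∧ Squarefree n ∧
          ∀ p : ℕ, p.Prime → p ∣ n → p % q = 1} : ℝ) ≤
        C * y * (Real.log (Real.log y) / Real.log y) ^ ((1 : ℝ) - 1 / q.totient) := by
  have : NeZero q := ⟨by omega⟩
  obtain ⟨C, hC⟩ := aux_sum_inv q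
  refine ⟨(1 + Real.log 4) * Real.exp C, Real.exp (Real.exp 1), fun y hy => ?_⟩
  have hy0 : 0 < y := lt_of_lt_of_le (Real.exp_pos _) hy
  have hL : Real.exp 1 ≤ Real.log y := by rwa [Real.le_log_iff_exp_le hy0]
  have hL0 : 0 < Real.log y := lt_of_lt_of_le (Real.exp_pos _) hL
  have hLL : 1 ≤ Real.log (Real.log y) := by rwa [Real.le_log_iff_exp_le hL0]
  have hye : Real.exp 1 ≤ y :=
    le_trans (Real.exp_le_exp.mpr (Real.one_le_exp (by norm_num))) hy
  have hset : {n : ℕ | 1 ≤ n ∧ (n : ℝ) ≤ y ∧ Squarefree n ∧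
          ∀ p : ℕ, p.Prime → p ∣ n → p % q = 1} = (auxB q ⌊y⌋₊ : Set ℕ) := by
    ext n
    simp only [Set.mem_ofPred_eq, Finset.mem_coe, mem_auxB, Nat.le_floor_iff hy0.le, and_assoc]
  rw [hset, Nat.card_coe_set_eq, Set.ncard_coe_finset]
  have hfl := Nat.floor_le hy0.le
  have h1 := aux_card_log q ⌊y⌋₊ y hy0 hfl
  have h2 := aux_sum_le_prod q ⌊y⌋₊
  have h3 := hC y hye (auxP q ⌊y⌋₊) (by
    intro p hp
    obtain ⟨⟨-, hpN⟩, hpp, hpq⟩ := mem_auxP.mp hp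
    refine ⟨hpp, ?_, le_trans (by exact_mod_cast hpN) hfl⟩
    have : ((p : ℕ) : ZMod q) = ((1 : ℕ) : ZMod q) := by
      rw [ZMod.natCast_eq_natCast_iff, Nat.ModEq, hpq, Nat.mod_eq_of_lt (by omega)]
    simpa using this)
  have hφ : (1 : ℝ) ≤ q.totient := by exact_mod_cast Nat.totient_pos.mpr (by omega)
  set a : ℝ := (1 : ℝ) - 1 / q.totient with ha
  have ha0 : 0 ≤ a := by
    rw [ha, sub_nonneg, div_le_one (by linarith)]; exact hφ
  have hlog4 : 0 ≤ Real.log 4 := Real.log_nonneg (by norm_num)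
  have h4 : ∑ n ∈ auxB q ⌊y⌋₊, (n : ℝ)⁻¹ ≤ Real.log y * (Real.exp C * (Real.log y) ^ (-a)) := by
    refine (h2.trans (Real.exp_le_exp.mpr h3)).trans (le_of_eq ?_)
    rw [Real.rpow_def_of_pos hL0]
    nth_rewrite 2 [← Real.exp_log hL0]
    rw [← Real.exp_add, ← Real.exp_add]
    congr 1
    rw [ha]; ring
  have h5 : ((auxB q ⌊y⌋₊).card : ℝ) ≤
      (1 + Real.log 4) * y * (Real.exp C * (Real.log y) ^ (-a)) := by
    refine le_of_mul_le_mul_right (h1.trans ?_) hL0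
    calc _ ≤ (1 + Real.log 4) * y * (Real.log y * (Real.exp C * (Real.log y) ^ (-a))) := by gcongr
      _ = _ := by ring
  refine h5.trans ?_
  have h6 : (Real.log y) ^ (-a) ≤ (Real.log (Real.log y) / Real.log y) ^ a := by
    rw [Real.rpow_neg hL0.le, ← Real.inv_rpow hL0.le]
    refine Real.rpow_le_rpow (by positivity) ?_ ha0
    rw [div_eq_mul_inv]
    exact le_mul_of_one_le_left (by positivity) hLL
  calc _ ≤ (1 + Real.log 4) * y *
        (Real.exp C * (Real.log (Real.log y) / Real.log y) ^ a) := by gcongr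
    _ = _ := by ring
end

section
/- For an algebraic number field K of degree n₀ over Q, the number a(n) of integral ideals of norm n satisfies a(n) ≤ d(n)^{n₀ - 1}, where d(n) is the number of divisors of n. -/
open NumberField Ideal UniqueFactorizationMonoid

theorem aux_count {α : Type*} [DecidableEq α] (g : α → ℕ) (s t : Multiset α) (a : α) (ha : g a ≠ 0)
    (h : (s.map g).sum = (t.map g).sum)
    (hc : ∀ b, b ≠ a → g b ≠ 0 → s.count b = t.count b) : s.count a = t.count a := by
  have key : ∀ u : Multiset α, u ⊆ s + t →
      (u.map g).sum = ∑ b ∈ (insert a (s + t).toFinset), u.count b * g b := by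
    intro u hu
    rw [Finset.sum_multiset_map_count]
    simp only [smul_eq_mul]
    apply Finset.sum_subset
    · intro x hx
      exact Finset.mem_insert_of_mem (Multiset.mem_toFinset.2 (hu (Multiset.mem_toFinset.1 hx)))
    · intro x _ hx
      rw [Multiset.count_eq_zero_of_notMem (by simpa using hx), zero_mul]
  rw [key s (Multiset.subset_of_le (Multiset.le_add_right s t)),
    key t (Multiset.subset_of_le (Multiset.le_add_left t s)),
    ← Finset.add_sum_erase _ _ (Finset.mem_insert_self a _),
    ← Finset.add_sum_erase _ (fun b => t.count b * g b) (Finset.mem_insert_self a _)] at h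
  have h2 : ∑ b ∈ (insert a (s + t).toFinset).erase a, s.count b * g b
      = ∑ b ∈ (insert a (s + t).toFinset).erase a, t.count b * g b := by
    apply Finset.sum_congr rfl
    intro b hb
    by_cases hg : g b = 0
    · simp [hg]
    · rw [hc b (Finset.ne_of_mem_erase hb) hg]
  rw [h2] at h
  exact Nat.eq_of_mul_eq_mul_right (Nat.pos_of_ne_zero ha) (Nat.add_right_cancel h)

theorem aux_fact (K : Type*) [Field K] [NumberField K] (p : ℕ) (I : Ideal (𝓞 K)) (hI : I ≠ ⊥) :
    ((normalizedFactors I).map (fun P => (absNorm P).factorization p)).sum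
      = (absNorm I).factorization p := by
  have h0 : ∀ P ∈ normalizedFactors I, absNorm P ≠ 0 := fun P hP => by
    rw [Ne, absNorm_eq_zero_iff]
    exact (prime_of_normalized_factor P hP).ne_zero
  have : ∀ s : Multiset (Ideal (𝓞 K)), (∀ P ∈ s, absNorm P ≠ 0) →
      (s.map (fun P => (absNorm P).factorization p)).sum = (absNorm s.prod).factorization p := by
    intro s
    induction s using Multiset.induction_on with
    | empty => intro _; simp
    | cons a s ih =>
      intro h
      have h1 : absNorm s.prod ≠ 0 := by
        rw [map_multiset_prod, Ne, Multiset.prod_eq_zero_iff]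
        simp only [Multiset.mem_map, not_exists, not_and]
        exact fun x hx => h x (Multiset.mem_cons_of_mem hx)
      rw [Multiset.map_cons, Multiset.sum_cons, Multiset.prod_cons, map_mul,
        Nat.factorization_mul (h a (Multiset.mem_cons_self a s)) h1,
        ih fun P hP => h P (Multiset.mem_cons_of_mem hP)]
      rfl
  rw [this _ h0, Ideal.prod_normalizedFactors_eq_self hI]

theorem aux_primes (K : Type*) [Field K] [NumberField K] (p : ℕ) (hp : p.Prime) :
    ∃ (S : Finset (Ideal (𝓞 K))) (P₀ : Ideal (𝓞 K)), S.card ≤ Module.finrank ℚ K - 1 ∧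
      Prime P₀ ∧ p ∣ absNorm P₀ ∧ (∀ P ∈ S, p ∣ absNorm P) ∧
      ∀ P : Ideal (𝓞 K), Prime P → p ∣ absNorm P → P ≠ P₀ → P ∈ S := by
  classical
  have hpZ : Prime (p : ℤ) := Nat.prime_iff_prime_int.1 hp
  have hp0 : span {(p : ℤ)} ≠ ⊥ := by simpa using hp.ne_zero
  have : (span {(p : ℤ)}).IsMaximal :=
    ((span_singleton_prime hpZ.ne_zero).2 hpZ).isMaximal hp0
  have hdvd : ∀ P : Ideal (𝓞 K), Prime P →
      (p ∣ absNorm P ↔ P ∈ IsDedekindDomain.primesOverFinset (span {(p : ℤ)}) (𝓞 K)) := by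
    intro P hP
    rw [IsDedekindDomain.mem_primesOverFinset_iff hp0]
    constructor
    · intro h
      obtain ⟨Q, hQ, hQp, hQP⟩ := exists_isMaximal_dvd_of_dvd_absNorm' hp P h
      have hPQ : P = Q :=
        ((isPrime_of_prime hP).isMaximal hP.ne_zero).eq_of_le hQ.ne_top (le_of_dvd hQP)
      subst hPQ
      exact ⟨hQ.isPrime, ⟨hQp.symm⟩⟩
    · rintro ⟨_, hl⟩
      have h := Int.absNorm_under_dvd_absNorm P
      rw [← hl.over] at h
      simpa using h
  have hcard := card_primesOverFinset_le_finrank (R := ℤ) (𝓞 K) ℚ K hp0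
  obtain ⟨⟨P₀, hP₀⟩⟩ := (span {(p : ℤ)}).nonempty_primesOver (S := 𝓞 K)
  have hmem := (IsDedekindDomain.mem_primesOverFinset_iff hp0 (𝓞 K)).2 hP₀
  have hprime : ∀ P ∈ IsDedekindDomain.primesOverFinset (span {(p : ℤ)}) (𝓞 K), Prime P := by
    intro P hP
    obtain ⟨h1, h2⟩ := (IsDedekindDomain.mem_primesOverFinset_iff hp0 (𝓞 K)).1 hP
    exact prime_of_isPrime (ne_bot_of_liesOver_of_ne_bot hp0 P) h1
  refine ⟨(IsDedekindDomain.primesOverFinset (span {(p : ℤ)}) (𝓞 K)).erase P₀, P₀, ?_,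
    hprime _ hmem, (hdvd _ (hprime _ hmem)).2 hmem, ?_, ?_⟩
  · rw [Finset.card_erase_of_mem hmem]
    exact Nat.sub_le_sub_right hcard 1
  · intro P hP
    have h := Finset.mem_of_mem_erase hP
    exact (hdvd _ (hprime _ h)).2 h
  · intro P hP hpP hne
    exact Finset.mem_erase.2 ⟨hne, (hdvd P hP).1 hpP⟩

theorem ideal_count_le_divisor_count_pow (K : Type*) [Field K] [NumberField K]
    (n : ℕ) (hn : 0 < n) :
    Nat.card {I : Ideal (NumberField.RingOfIntegers K) // Ideal.absNorm I = n} ≤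
      n.divisors.card ^ (Module.finrank ℚ K - 1) := by
  classical
  choose! S P₀ hcard hP₀ hP₀n hS hall using aux_primes K
  have hne : ∀ I : {I : Ideal (𝓞 K) // absNorm I = n}, I.1 ≠ ⊥ := by
    rintro ⟨I, hI⟩ rfl
    simp at hI; omega
  have hle : ∀ (I : {I : Ideal (𝓞 K) // absNorm I = n}) (p : ℕ), p.Prime → ∀ P ∈ S p,
      (normalizedFactors I.1).count P < n.factorization p + 1 := by
    intro I p hp P hP
    rw [Nat.lt_succ_iff, ← hp.pow_dvd_iff_le_factorization hn.ne']
    refine (pow_dvd_pow_of_dvd (hS p hp P hP) _).trans ?_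
    rw [← map_pow]
    refine (map_dvd absNorm ?_).trans I.2.dvd
    conv_rhs => rw [← Ideal.prod_normalizedFactors_eq_self (hne I)]
    rw [← Multiset.prod_replicate]
    exact Multiset.prod_dvd_prod_of_le (Multiset.le_count_iff_replicate_le.1 le_rfl)
  let f : {I : Ideal (𝓞 K) // absNorm I = n} →
      ((p : n.primeFactors) → (S p) → Fin (n.factorization p + 1)) := fun I p P =>
    ⟨(normalizedFactors I.1).count P.1, hle I p (Nat.prime_of_mem_primeFactors p.2) P P.2⟩
  have hf : Function.Injective f := by
    intro I J hIJ
    have h1 : ∀ p : ℕ, p.Prime → p ∣ n → ∀ P ∈ S p,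
        (normalizedFactors I.1).count P = (normalizedFactors J.1).count P := by
      intro p hp hpn P hP
      have := congrFun (congrFun hIJ ⟨p, Nat.mem_primeFactors.2 ⟨hp, hpn, hn.ne'⟩⟩) ⟨P, hP⟩
      exact congrArg Fin.val this
    have hnf : ∀ (I : {I : Ideal (𝓞 K) // absNorm I = n}) P, ¬ absNorm P ∣ n →
        (normalizedFactors I.1).count P = 0 := by
      intro I P hP
      rw [Multiset.count_eq_zero]
      intro h
      exact hP (I.2 ▸ map_dvd absNorm (dvd_of_mem_normalizedFactors h))
    have hnp : ∀ (I : {I : Ideal (𝓞 K) // absNorm I = n}) P, ¬ Prime P →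
        (normalizedFactors I.1).count P = 0 := by
      intro I P hP
      rw [Multiset.count_eq_zero]
      exact fun h => hP (prime_of_normalized_factor P h)
    have h2 : ∀ p : ℕ, p.Prime → p ∣ n → ∀ P, p ∣ absNorm P → P ≠ P₀ p →
        (normalizedFactors I.1).count P = (normalizedFactors J.1).count P := by
      intro p hp hpn P hP hPP
      by_cases hPr : Prime P
      · exact h1 p hp hpn P (hall p hp P hPr hP hPP)
      · rw [hnp I P hPr, hnp J P hPr]
    have h3 : ∀ P, (normalizedFactors I.1).count P = (normalizedFactors J.1).count P := by
      intro P
      by_cases hPr : Prime P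
      swap
      · rw [hnp I P hPr, hnp J P hPr]
      by_cases hPn : absNorm P ∣ n
      swap
      · rw [hnf I P hPn, hnf J P hPn]
      have hP1 : absNorm P ≠ 1 := by
        rw [Ne, absNorm_eq_one_iff, ← one_eq_top]
        exact hPr.ne_one
      obtain ⟨p, hp, hpP⟩ := Nat.exists_prime_and_dvd hP1
      have hpn := hpP.trans hPn
      by_cases hPP : P = P₀ p
      · have hN0 : absNorm P ≠ 0 := by rw [Ne, absNorm_eq_zero_iff]; exact hPr.ne_zero
        apply aux_count (fun P => (absNorm P).factorization p)
        · exact (hp.factorization_pos_of_dvd hN0 hpP).ne'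
        · rw [aux_fact K p _ (hne I), aux_fact K p _ (hne J), I.2, J.2]
        · intro Q hQ hQ0
          exact h2 p hp hpn Q (Nat.dvd_of_factorization_pos hQ0) (hPP ▸ hQ)
      · exact h2 p hp hpn P hpP hPP
    apply Subtype.ext
    rw [← Ideal.prod_normalizedFactors_eq_self (hne I), ← Ideal.prod_normalizedFactors_eq_self (hne J),
      Multiset.ext.2 h3]
  refine (Nat.card_le_card_of_injective f hf).trans ?_
  rw [Nat.card_eq_fintype_card, Fintype.card_pi, Nat.card_divisors hn.ne', ← Finset.prod_pow,
    ← Finset.prod_coe_sort n.primeFactors]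
  apply Finset.prod_le_prod'
  intro p _
  rw [Fintype.card_fun, Fintype.card_fin, Fintype.card_coe]
  exact Nat.pow_le_pow_right (Nat.succ_pos _) (hcard p (Nat.prime_of_mem_primeFactors p.2))
end
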